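/- Let A be a ring such that the finitely presented right A-modules form an abelian category (i.e. kernels of maps between finitely presented modules are finitely presented; e.g. A right Noetherian). Let M be an endofinite A-module and Z a finitely presented A-module. Then Z belongs to the additive locus of χ_M (that is, χ_M(X) − χ_M(Y) + χ_M(Z) = 0 for every short exact sequence 0 → X → Y → Z → 0 of finitely presented A-modules) if and only if Ext¹_A(Z, M) = 0. -/

import Mathlib

/-- The composition length of a module (the length of a composition series,
zero if none exists). -/
noncomputable def compLength (R : Type) [Ring R] (M : Type) [AddCommGroup M] [Module R M] : ℕ := by
  classical
  exact if h : ∃ s : CompositionSeries (Submodule R M), s.head = ⊥ ∧ s.last = ⊤ then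
    h.choose.length else 0

/-- A module `M` is endofinite if it has finite composition length over its
endomorphism ring, which acts on `M` by application. -/
def IsEndofinite (A : Type) [Ring A] (M : Type) [AddCommGroup M] [Module A M] : Prop :=
  IsFiniteLength (Module.End A M) M

/-- The subadditive function `χ_M` associated to a module `M`:
`χ_M(X) = ℓ_{End_A(M)} Hom_A(X, M)`, where `End_A(M)` acts by postcomposition. -/
noncomputable def chiMod (A : Type) [Ring A] (M : Type) [AddCommGroup M] [Module A M]
    (X : Type) [AddCommGroup X] [Module A X] : ℕ :=
  compLength (Module.End A M) (X →ₗ[A] M)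

/-- A subadditive function on the finitely presented `A`-modules: it depends only on
the isomorphism class, is additive on direct sums, and satisfies
`χ(X) + χ(Z) ≥ χ(Y)` for every exact sequence `X → Y → Z → 0`. -/
def IsSubadditive (A : Type) [Ring A]
    (χ : (X : Type) → [AddCommGroup X] → [Module A X] → ℕ) : Prop :=
  (∀ (X Y : Type) [AddCommGroup X] [Module A X] [AddCommGroup Y] [Module A Y],
      Module.FinitePresentation A X → Module.FinitePresentation A Y →
      (X ≃ₗ[A] Y) → χ X = χ Y) ∧
  (∀ (X Y : Type) [AddCommGroup X] [Module A X] [AddCommGroup Y] [Module A Y],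
      Module.FinitePresentation A X → Module.FinitePresentation A Y →
      χ (X × Y) = χ X + χ Y) ∧
  (∀ (X Y Z : Type) [AddCommGroup X] [Module A X] [AddCommGroup Y] [Module A Y]
      [AddCommGroup Z] [Module A Z],
      Module.FinitePresentation A X → Module.FinitePresentation A Y →
      Module.FinitePresentation A Z →
      ∀ (f : X →ₗ[A] Y) (g : Y →ₗ[A] Z),
      Function.Exact f g → Function.Surjective g → χ Y ≤ χ X + χ Z)

/-- Membership in the additive locus `Adloc(χ)`: `Z` is finitely presented and
`χ(X) - χ(Y) + χ(Z) = 0` for every short exact sequence `0 → X → Y → Z → 0` of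
finitely presented modules. -/
def MemAdloc (A : Type) [Ring A]
    (χ : (X : Type) → [AddCommGroup X] → [Module A X] → ℕ)
    (Z : Type) [AddCommGroup Z] [Module A Z] : Prop :=
  Module.FinitePresentation A Z ∧
  ∀ (X Y : Type) [AddCommGroup X] [Module A X] [AddCommGroup Y] [Module A Y],
    Module.FinitePresentation A X → Module.FinitePresentation A Y →
    ∀ (f : X →ₗ[A] Y) (g : Y →ₗ[A] Z),
    Function.Injective f → Function.Exact f g → Function.Surjective g →
    χ X + χ Z = χ Y

/-- The hypothesis that the finitely presented `A`-modules form an abelian category: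
kernels of maps between finitely presented modules are finitely presented. -/
def FpAbelian (A : Type) [Ring A] : Prop :=
  ∀ (X Y : Type) [AddCommGroup X] [Module A X] [AddCommGroup Y] [Module A Y],
    Module.FinitePresentation A X → Module.FinitePresentation A Y →
    ∀ f : X →ₗ[A] Y, Module.FinitePresentation A (LinearMap.ker f)

/-!
Over `S := End_A(M)`, the contravariant functor `Hom_A(-, M)` turns a short exact sequence
`0 → X → Y → Z → 0` into a left exact sequence
`0 → Hom_A(Z, M) → Hom_A(Y, M) → Hom_A(X, M)` of `S`-modules of finite length. Counting lengths,
`χ_M(X) + χ_M(Z) = χ_M(Y)` holds exactly when the last map is surjective. By the long exact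
sequence this is the case if `Ext¹_A(Z, M) = 0`; conversely, when `Y` is projective, surjectivity
forces `Ext¹_A(Z, M) = 0`, and since kernels between finitely presented modules are finitely
presented, some presentation `0 → K → Aⁿ → Z → 0` is among the sequences defining the additive
locus.
-/

section Length

variable {R N M P : Type*} [Ring R] [AddCommGroup N] [Module R N] [AddCommGroup M] [Module R M]
  [AddCommGroup P] [Module R P]

theorem length_submodule_eq_length_iff (hP : IsFiniteLength R P) (Q : Submodule R P) :
    Module.length R Q = Module.length R P ↔ Q = ⊤ := by
  obtain ⟨_, _⟩ := isFiniteLength_iff_isNoetherian_isArtinian.mp hP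
  refine ⟨fun h ↦ ?_, fun h ↦ by rw [h, Module.length_top]⟩
  by_contra hQ
  exact (Submodule.length_lt hQ).ne h

theorem length_eq_add_iff_surjective_of_exact (hN : IsFiniteLength R N) (hP : IsFiniteLength R P)
    {f : N →ₗ[R] M} {g : M →ₗ[R] P} (hf : Function.Injective f) (hfg : Function.Exact f g) :
    Module.length R M = Module.length R N + Module.length R P ↔ Function.Surjective g := by
  have hrange : Function.Exact f g.rangeRestrict := fun m ↦ Subtype.ext_iff.trans (hfg m)
  rw [Module.length_eq_add_of_exact f g.rangeRestrict hf g.surjective_rangeRestrict hrange,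
    (ENat.addLECancellable_of_ne_top (Module.length_ne_top_iff.mpr hN)).inj,
    length_submodule_eq_length_iff hP, LinearMap.range_eq_top]

end Length

theorem natCast_compLength {R M : Type} [Ring R] [AddCommGroup M] [Module R M]
    (h : IsFiniteLength R M) : (compLength R M : ℕ∞) = Module.length R M := by
  have hseries := isFiniteLength_iff_exists_compositionSeries.mp h
  rw [compLength, dif_pos hseries]
  exact Module.length_compositionSeries _ hseries.choose_spec.1 hseries.choose_spec.2

section Hom

variable {A X Y Z : Type*} [Ring A] [AddCommGroup X] [Module A X] [AddCommGroup Y] [Module A Y]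
  [AddCommGroup Z] [Module A Z] (S M : Type*) [Ring S] [AddCommGroup M] [Module A M] [Module S M]
  [SMulCommClass A S M]

-- The noncommutative analogue of `LinearMap.exact_lcomp_of_exact_of_surjective`.
theorem exact_lcomp_of_exact_of_surjective {f : X →ₗ[A] Y} {g : Y →ₗ[A] Z}
    (hfg : Function.Exact f g) (hg : Function.Surjective g) :
    Function.Exact (g.lcomp S M) (f.lcomp S M) := by
  intro h
  simp only [LinearMap.lcomp_apply', Set.mem_range]
  constructor
  · intro hf
    refine ⟨(LinearMap.range f).liftQ h (LinearMap.range_le_ker_iff.mpr hf) ∘ₗ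
      (hfg.linearEquivOfSurjective hg).symm.toLinearMap, ?_⟩
    ext y
    simp
  · rintro ⟨k, rfl⟩
    rw [LinearMap.comp_assoc, hfg.linearMap_comp_eq_zero, LinearMap.comp_zero]

variable {S M}

theorem isFiniteLength_linearMap [Module.Finite A X] (hM : IsFiniteLength S M) :
    IsFiniteLength S (X →ₗ[A] M) := by
  obtain ⟨n, p, hp⟩ := Module.Finite.exists_fin' A X
  have hpow : IsFiniteLength S (Fin n → M) := by
    obtain ⟨_, _⟩ := isFiniteLength_iff_isNoetherian_isArtinian.mp hM
    exact isFiniteLength_iff_isNoetherian_isArtinian.mpr ⟨inferInstance, inferInstance⟩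
  exact (((Pi.basisFun A (Fin n)).constr S).isFiniteLength hpow).of_injective
    (LinearMap.lcomp_injective_of_surjective p hp)

end Hom

theorem chiMod_add_eq_iff_surjective_lcomp {A M X Y Z : Type} [Ring A] [AddCommGroup M]
    [Module A M] [AddCommGroup X] [Module A X] [AddCommGroup Y] [Module A Y] [AddCommGroup Z]
    [Module A Z] [Module.Finite A X] [Module.Finite A Y] [Module.Finite A Z]
    (hM : IsEndofinite A M) {f : X →ₗ[A] Y} {g : Y →ₗ[A] Z} (hfg : Function.Exact f g)
    (hg : Function.Surjective g) :
    chiMod A M X + chiMod A M Z = chiMod A M Y ↔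
      Function.Surjective (f.lcomp (Module.End A M) M) := by
  have hX : IsFiniteLength (Module.End A M) (X →ₗ[A] M) := isFiniteLength_linearMap hM
  have hY : IsFiniteLength (Module.End A M) (Y →ₗ[A] M) := isFiniteLength_linearMap hM
  have hZ : IsFiniteLength (Module.End A M) (Z →ₗ[A] M) := isFiniteLength_linearMap hM
  rw [← length_eq_add_iff_surjective_of_exact hZ hX
      (LinearMap.lcomp_injective_of_surjective g hg)
      (exact_lcomp_of_exact_of_surjective _ M hfg hg),
    ← natCast_compLength hX, ← natCast_compLength hY, ← natCast_compLength hZ,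
    add_comm, eq_comm]
  exact_mod_cast Iff.rfl

section Ext

open CategoryTheory

universe w v u

section Comparison

/- The statement uses the derived functor `Ext R C n`, whereas the long exact sequence is available
for `Abelian.Ext`, the `Hom` groups of the derived category. Both are computed by the same cocycles
on a projective resolution. -/

variable {C : Type u} [Category.{v} C] [Abelian C] {X : C} (P : ProjectiveResolution X) (Y : C)

theorem subsingleton_abelianExt_succ_iff [HasExt.{w} C] (n : ℕ) :
    Subsingleton (Abelian.Ext X Y (n + 1)) ↔
      ∀ φ : P.complex.X (n + 1) ⟶ Y, P.complex.d (n + 2) (n + 1) ≫ φ = 0 →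
        ∃ ψ : P.complex.X n ⟶ Y, P.complex.d (n + 1) n ≫ ψ = φ := by
  constructor
  · intro _ φ hφ
    exact (P.extMk_eq_zero_iff φ (n + 2) rfl hφ n rfl).mp (Subsingleton.elim _ _)
  · refine fun h ↦ subsingleton_of_forall_eq 0 fun α ↦ ?_
    obtain ⟨φ, hφ, rfl⟩ := P.extMk_surjective α (n + 2) rfl
    exact (P.extMk_eq_zero_iff φ (n + 2) rfl hφ n rfl).mpr (h φ hφ)

variable (R : Type*) [Ring R] [Linear R C] [EnoughProjectives C]

theorem subsingleton_ext_succ_iff (n : ℕ) :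
    Subsingleton (((Ext R C (n + 1)).obj (Opposite.op X)).obj Y) ↔
      ∀ φ : P.complex.X (n + 1) ⟶ Y, P.complex.d (n + 2) (n + 1) ≫ φ = 0 →
        ∃ ψ : P.complex.X n ⟶ Y, P.complex.d (n + 1) n ≫ ψ = φ := by
  rw [← ModuleCat.isZero_iff_subsingleton, (P.isoExt (R := R) (n + 1) Y).isZero_iff,
    ← HomologicalComplex.exactAt_iff_isZero_homology,
    HomologicalComplex.exactAt_iff' _ n (n + 1) (n + 2) (by simp) (by simp),
    ShortComplex.moduleCat_exact_iff]
  rfl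

theorem subsingleton_ext_succ_iff_subsingleton_abelianExt [HasExt.{w} C] (X Y : C) (n : ℕ) :
    Subsingleton (((Ext R C (n + 1)).obj (Opposite.op X)).obj Y) ↔
      Subsingleton (Abelian.Ext X Y (n + 1)) :=
  (subsingleton_ext_succ_iff (projectiveResolution X) Y R n).trans
    (subsingleton_abelianExt_succ_iff (projectiveResolution X) Y n).symm

end Comparison

section LongExactSequence

variable {C : Type u} [Category.{v} C] [Abelian C] [HasExt.{w} C] {S : ShortComplex C}
  (hS : S.ShortExact) (Y : C)

include hS

theorem surjective_precomp_of_subsingleton_abelianExt_one [Subsingleton (Abelian.Ext S.X₃ Y 1)] :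
    Function.Surjective fun k : S.X₂ ⟶ Y ↦ S.f ≫ k := by
  intro h
  obtain ⟨x, hx⟩ := Abelian.Ext.contravariant_sequence_exact₁ hS Y (Abelian.Ext.mk₀ h)
    (add_zero 1) (Subsingleton.elim _ _)
  obtain ⟨k, rfl⟩ := Abelian.Ext.addEquiv₀.symm.surjective x
  exact ⟨k, Abelian.Ext.addEquiv₀.symm.injective (by simpa using hx)⟩

theorem subsingleton_abelianExt_one_of_surjective_precomp [Projective S.X₂]
    (hsurj : Function.Surjective fun k : S.X₂ ⟶ Y ↦ S.f ≫ k) :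
    Subsingleton (Abelian.Ext S.X₃ Y 1) := by
  refine subsingleton_of_forall_eq 0 fun α ↦ ?_
  obtain ⟨x, rfl⟩ := Abelian.Ext.contravariant_sequence_exact₃ hS Y α
    (Abelian.Ext.eq_zero_of_projective _) (add_zero 1)
  obtain ⟨h, rfl⟩ := Abelian.Ext.addEquiv₀.symm.surjective x
  obtain ⟨k, rfl⟩ := hsurj h
  simp [← Abelian.Ext.mk₀_comp_mk₀]

end LongExactSequence

theorem surjective_lcomp_iff_surjective_precomp {A : Type u} {X Y M : Type v} [Ring A]
    [AddCommGroup X] [Module A X] [AddCommGroup Y] [Module A Y] [AddCommGroup M] [Module A M]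
    (S : Type*) [Ring S] [Module S M] [SMulCommClass A S M] (f : X →ₗ[A] Y) :
    Function.Surjective (f.lcomp S M) ↔
      Function.Surjective
        fun k : ModuleCat.of A Y ⟶ ModuleCat.of A M ↦ ModuleCat.ofHom f ≫ k := by
  constructor
  · intro hsurj h
    obtain ⟨k, hk⟩ := hsurj h.hom
    exact ⟨ModuleCat.ofHom k, ModuleCat.hom_ext hk⟩
  · intro hsurj h
    obtain ⟨k, hk⟩ := hsurj (ModuleCat.ofHom h)
    exact ⟨k.hom, congrArg ModuleCat.Hom.hom hk⟩

variable {A M Z : Type} [Ring A] [AddCommGroup M] [Module A M] [AddCommGroup Z] [Module A Z]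

theorem memAdloc_chiMod_of_subsingleton_abelianExt_one (hM : IsEndofinite A M)
    (hZ : Module.FinitePresentation A Z)
    [Subsingleton (Abelian.Ext (ModuleCat.of A Z) (ModuleCat.of A M) 1)] :
    MemAdloc A (chiMod A M) Z := by
  refine ⟨hZ, fun X Y _ _ _ _ _ _ f g hf hfg hg ↦ ?_⟩
  have hS : (ModuleCat.shortComplexOfCompEqZero f g hfg.linearMap_comp_eq_zero).ShortExact :=
    ModuleCat.shortComplex_shortExact _ hfg hf hg
  rw [chiMod_add_eq_iff_surjective_lcomp hM hfg hg, surjective_lcomp_iff_surjective_precomp]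
  exact surjective_precomp_of_subsingleton_abelianExt_one hS (ModuleCat.of A M)

theorem subsingleton_abelianExt_one_of_memAdloc_chiMod (hA : FpAbelian A) (hM : IsEndofinite A M)
    (hZ : MemAdloc A (chiMod A M) Z) :
    Subsingleton (Abelian.Ext (ModuleCat.of A Z) (ModuleCat.of A M) 1) := by
  obtain ⟨hfp, hadd⟩ := hZ
  obtain ⟨n, p, hp⟩ := Module.Finite.exists_fin' A Z
  have hK : Module.FinitePresentation A (LinearMap.ker p) := hA _ _ inferInstance hfp p
  have hexact : Function.Exact (LinearMap.ker p).subtype p := p.exact_subtype_ker_map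
  have hχ : chiMod A M (LinearMap.ker p) + chiMod A M Z = chiMod A M (Fin n → A) :=
    hadd _ _ hK inferInstance _ p (LinearMap.ker p).injective_subtype hexact hp
  rw [chiMod_add_eq_iff_surjective_lcomp hM hexact hp,
    surjective_lcomp_iff_surjective_precomp] at hχ
  have : Projective p.shortComplexKer.X₂ :=
    inferInstanceAs (Projective (ModuleCat.of A (Fin n → A)))
  exact subsingleton_abelianExt_one_of_surjective_precomp (LinearMap.shortExact_shortComplexKer hp)
    (ModuleCat.of A M) hχ

end Ext

open CategoryTheory in
/-- If the finitely presented `A`-modules form an abelian category, `M` is an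
endofinite `A`-module and `Z` is finitely presented, then `Z` lies in the additive locus of
`χ_M` if and only if `Ext¹_A(Z, M) = 0`. -/
theorem statement1 (A : Type) [Ring A] (hA : FpAbelian A)
    (M : Type) [AddCommGroup M] [Module A M] (hM : IsEndofinite A M)
    (Z : Type) [AddCommGroup Z] [Module A Z] (hZ : Module.FinitePresentation A Z) :
    MemAdloc A (chiMod A M) Z ↔
      Subsingleton (((Ext ℤ (ModuleCat A) 1).obj
        (Opposite.op (ModuleCat.of A Z))).obj (ModuleCat.of A M)) := by
  rw [subsingleton_ext_succ_iff_subsingleton_abelianExt]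
  exact ⟨subsingleton_abelianExt_one_of_memAdloc_chiMod hA hM,
    fun _ ↦ memAdloc_chiMod_of_subsingleton_abelianExt_one hM hZ⟩
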